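/- Let X ∈ ℝ^{m×n}, let 0 ≤ ε₁ < 1 and 0 ≤ ε₂ < 1, let Ω₁ ∈ ℝ^{s₁×m} be an ε₁-subspace embedding for the column space of X, and let Ω₂ ∈ ℝ^{s₂×s₁} be an ε₂-subspace embedding for the column space of Ω₁X. Set ε_s = ε₁ + ε₂ − ε₁ε₂ and ε_b = ε₁ + ε₂ + ε₁ε₂. Then the Frobenius norms satisfy √(1−ε_s)·‖X‖_F ≤ ‖Ω₂Ω₁X‖_F ≤ √(1+ε_b)·‖X‖_F. -/

import Mathlib

open scoped BigOperators

/-- Euclidean 2-norm of a vector in `Fin m → ℝ`. -/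
noncomputable def evNorm {m : ℕ} (x : Fin m → ℝ) : ℝ :=
  Real.sqrt (∑ i, x i ^ 2)

/-- Euclidean inner product of vectors in `Fin m → ℝ`. -/
noncomputable def evInner {m : ℕ} (x y : Fin m → ℝ) : ℝ :=
  ∑ i, x i * y i

/-- `[X]_g`: the maximum Euclidean 2-norm among the columns of `X`. -/
noncomputable def gMax {m n : ℕ} (X : Matrix (Fin m) (Fin n) ℝ) : ℝ :=
  ⨆ j : Fin n, evNorm (fun i => X i j)

/-- `‖X‖_g = √n · [X]_g` where `n` is the number of columns of `X`. -/
noncomputable def gNorm {m n : ℕ} (X : Matrix (Fin m) (Fin n) ℝ) : ℝ :=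
  Real.sqrt n * gMax X

/-- Spectral norm (largest singular value): supremum of `‖Xv‖₂` over unit vectors `v`. -/
noncomputable def evSpectralNorm {m n : ℕ} (X : Matrix (Fin m) (Fin n) ℝ) : ℝ :=
  ⨆ v : {v : Fin n → ℝ // evNorm v = 1}, evNorm (X.mulVec v.1)

/-- Smallest singular value: infimum of `‖Xv‖₂` over unit vectors `v`. -/
noncomputable def sigmaMin {m n : ℕ} (X : Matrix (Fin m) (Fin n) ℝ) : ℝ :=
  ⨅ v : {v : Fin n → ℝ // evNorm v = 1}, evNorm (X.mulVec v.1)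

/-- Frobenius norm of a real matrix. -/
noncomputable def frobeniusNorm {m n : ℕ} (X : Matrix (Fin m) (Fin n) ℝ) : ℝ :=
  Real.sqrt (∑ i, ∑ j, X i j ^ 2)

/-- `Ω` is an `ε`-subspace embedding for the subspace `K ⊆ ℝ^m`. -/
def IsSubspaceEmbedding {s m : ℕ} (ε : ℝ) (Ω : Matrix (Fin s) (Fin m) ℝ)
    (K : Submodule ℝ (Fin m → ℝ)) : Prop :=
  ∀ x ∈ K, ∀ y ∈ K,
    |evInner x y - evInner (Ω.mulVec x) (Ω.mulVec y)| ≤ ε * evNorm x * evNorm y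

/-- Column space of a matrix: the span of its columns. -/
noncomputable def colSpace {m n : ℕ} (X : Matrix (Fin m) (Fin n) ℝ) :
    Submodule ℝ (Fin m → ℝ) :=
  Submodule.span ℝ (Set.range fun j : Fin n => fun i => X i j)

/-! Testing a subspace embedding on `x = y` gives `(1 - ε)‖x‖² ≤ ‖Ωx‖² ≤ (1 + ε)‖x‖²`. The squared
Frobenius norm is the sum of the squared norms of the columns, so it is distorted by the same
factors, and two successive sketches multiply them: `(1 - ε₂)(1 - ε₁) = 1 - ε_s` and
`(1 + ε₂)(1 + ε₁) = 1 + ε_b`. -/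

theorem evNorm_sq {m : ℕ} (x : Fin m → ℝ) : evNorm x ^ 2 = ∑ i, x i ^ 2 :=
  Real.sq_sqrt (Finset.sum_nonneg fun _ _ => sq_nonneg _)

theorem evInner_self {m : ℕ} (x : Fin m → ℝ) : evInner x x = evNorm x ^ 2 := by
  simp only [evNorm_sq, evInner, ← pow_two]

theorem frobeniusNorm_nonneg {m n : ℕ} (X : Matrix (Fin m) (Fin n) ℝ) : 0 ≤ frobeniusNorm X :=
  Real.sqrt_nonneg _

theorem frobeniusNorm_sq_eq_sum_col {m n : ℕ} (X : Matrix (Fin m) (Fin n) ℝ) :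
    frobeniusNorm X ^ 2 = ∑ j, evNorm (X.col j) ^ 2 := by
  have entries_nonneg : 0 ≤ ∑ i, ∑ j, X i j ^ 2 :=
    Finset.sum_nonneg fun _ _ => Finset.sum_nonneg fun _ _ => sq_nonneg _
  rw [frobeniusNorm, Real.sq_sqrt entries_nonneg, Finset.sum_comm]
  simp only [evNorm_sq, Matrix.col_apply]

theorem col_mem_colSpace {m n : ℕ} (X : Matrix (Fin m) (Fin n) ℝ) (j : Fin n) :
    X.col j ∈ colSpace X :=
  Submodule.subset_span ⟨j, rfl⟩

namespace IsSubspaceEmbedding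

variable {s m n : ℕ} {ε : ℝ} {Ω : Matrix (Fin s) (Fin m) ℝ} {K : Submodule ℝ (Fin m → ℝ)}

theorem abs_evNorm_sq_sub_le (hΩ : IsSubspaceEmbedding ε Ω K) {x : Fin m → ℝ} (hx : x ∈ K) :
    |evNorm x ^ 2 - evNorm (Ω.mulVec x) ^ 2| ≤ ε * evNorm x ^ 2 := by
  simpa only [evInner_self, mul_assoc, ← pow_two] using hΩ x hx x hx

theorem abs_frobeniusNorm_sq_sub_le (hΩ : IsSubspaceEmbedding ε Ω K)
    {X : Matrix (Fin m) (Fin n) ℝ} (hX : ∀ j, X.col j ∈ K) :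
    |frobeniusNorm X ^ 2 - frobeniusNorm (Ω * X) ^ 2| ≤ ε * frobeniusNorm X ^ 2 := by
  have col_mul (j : Fin n) : (Ω * X).col j = Ω.mulVec (X.col j) := rfl
  simp only [frobeniusNorm_sq_eq_sum_col, col_mul, ← Finset.sum_sub_distrib, Finset.mul_sum]
  exact (Finset.abs_sum_le_sum_abs _ _).trans
    (Finset.sum_le_sum fun j _ => hΩ.abs_evNorm_sq_sub_le (hX j))

theorem sqrt_mul_frobeniusNorm_le (hΩ : IsSubspaceEmbedding ε Ω K)
    {X : Matrix (Fin m) (Fin n) ℝ} (hX : ∀ j, X.col j ∈ K) :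
    √(1 - ε) * frobeniusNorm X ≤ frobeniusNorm (Ω * X) := by
  have sq_le : (1 - ε) * frobeniusNorm X ^ 2 ≤ frobeniusNorm (Ω * X) ^ 2 := by
    linarith [(abs_le.1 (hΩ.abs_frobeniusNorm_sq_sub_le hX)).2]
  simpa only [Real.sqrt_mul' _ (sq_nonneg _), Real.sqrt_sq (frobeniusNorm_nonneg _)]
    using Real.sqrt_le_sqrt sq_le

theorem frobeniusNorm_le_sqrt_mul (hΩ : IsSubspaceEmbedding ε Ω K)
    {X : Matrix (Fin m) (Fin n) ℝ} (hX : ∀ j, X.col j ∈ K) :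
    frobeniusNorm (Ω * X) ≤ √(1 + ε) * frobeniusNorm X := by
  have sq_le : frobeniusNorm (Ω * X) ^ 2 ≤ (1 + ε) * frobeniusNorm X ^ 2 := by
    linarith [(abs_le.1 (hΩ.abs_frobeniusNorm_sq_sub_le hX)).1]
  simpa only [Real.sqrt_mul' _ (sq_nonneg _), Real.sqrt_sq (frobeniusNorm_nonneg _)]
    using Real.sqrt_le_sqrt sq_le

end IsSubspaceEmbedding

/-- Multi-sketching, Frobenius norm: `√(1−ε_s)·‖X‖_F ≤ ‖Ω₂Ω₁X‖_F ≤ √(1+ε_b)·‖X‖_F`. -/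
theorem multiSketch_frobeniusNorm_bounds {s₁ s₂ m n : ℕ} {ε₁ ε₂ : ℝ}
    (hε₁0 : 0 ≤ ε₁) (hε₁1 : ε₁ < 1) (hε₂0 : 0 ≤ ε₂) (hε₂1 : ε₂ < 1)
    (X : Matrix (Fin m) (Fin n) ℝ)
    (Ω₁ : Matrix (Fin s₁) (Fin m) ℝ) (Ω₂ : Matrix (Fin s₂) (Fin s₁) ℝ)
    (hΩ₁ : IsSubspaceEmbedding ε₁ Ω₁ (colSpace X))
    (hΩ₂ : IsSubspaceEmbedding ε₂ Ω₂ (colSpace (Ω₁ * X))) :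
    Real.sqrt (1 - (ε₁ + ε₂ - ε₁ * ε₂)) * frobeniusNorm X ≤
        frobeniusNorm (Ω₂ * Ω₁ * X) ∧
      frobeniusNorm (Ω₂ * Ω₁ * X) ≤
        Real.sqrt (1 + (ε₁ + ε₂ + ε₁ * ε₂)) * frobeniusNorm X := by
  have lower_factor : √(1 - (ε₁ + ε₂ - ε₁ * ε₂)) = √(1 - ε₂) * √(1 - ε₁) := by
    rw [← Real.sqrt_mul (sub_nonneg.2 hε₂1.le)]
    ring_nf
  have upper_factor : √(1 + (ε₁ + ε₂ + ε₁ * ε₂)) = √(1 + ε₂) * √(1 + ε₁) := by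
    rw [← Real.sqrt_mul (by positivity)]
    ring_nf
  rw [lower_factor, upper_factor, mul_assoc, mul_assoc, Matrix.mul_assoc]
  constructor
  · calc √(1 - ε₂) * (√(1 - ε₁) * frobeniusNorm X)
        ≤ √(1 - ε₂) * frobeniusNorm (Ω₁ * X) := by
          gcongr
          exact hΩ₁.sqrt_mul_frobeniusNorm_le (col_mem_colSpace X)
      _ ≤ frobeniusNorm (Ω₂ * (Ω₁ * X)) := hΩ₂.sqrt_mul_frobeniusNorm_le (col_mem_colSpace _)
  · calc frobeniusNorm (Ω₂ * (Ω₁ * X))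
        ≤ √(1 + ε₂) * frobeniusNorm (Ω₁ * X) := hΩ₂.frobeniusNorm_le_sqrt_mul (col_mem_colSpace _)
      _ ≤ √(1 + ε₂) * (√(1 + ε₁) * frobeniusNorm X) := by
          gcongr
          exact hΩ₁.frobeniusNorm_le_sqrt_mul (col_mem_colSpace X)
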